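/- arXiv:2601.21930 — 2 statements merged into one kernel-verified Lean document; each statement's English description precedes it below -/
import Mathlib

section
/- Let z∞ ∈ [0,1) and suppose 0 ≤ γ₊ ≤ 2Γ (the CP-divisible case). Then σ(ℓ,z) ≥ 0 for every ℓ ≥ 0 and z ∈ ℝ with ℓ² + z² < 1. -/
/-!
Since `F > 0` and `Γ ≥ γ₊/2`, the production is at least `γ₊ · G(z)`, where, with `r² = ℓ² + z²`,
`a = artanh z∞` and `w = z∞`,
`G(z) = (r² - z²)/2 · F(r) + (w - z)(a - z F(r))`.
For fixed `r` this is a convex quadratic in `z ∈ [-r, r]` with vertex `w + a / F(r)`.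
If `r` lies to the left of the vertex, the minimum is `G(r) = (w - r)(artanh w - artanh r)`, which is
nonnegative because `artanh` is increasing. Otherwise `r F ≥ a + w F`, and the vertex value
`(F² (r² - w²) - a²) / (2F)` is already nonnegative. The lemma `quadratic_nonneg` is this
dichotomy.
-/


/-- Inverse hyperbolic tangent: arctanh r = (1/2) log((1+r)/(1-r)). -/
noncomputable def artanh (r : ℝ) : ℝ := (1/2) * Real.log ((1 + r) / (1 - r))

/-- F(r) := arctanh(r)/r with the convention F(0) = 1. -/
noncomputable def F (r : ℝ) : ℝ := if r = 0 then 1 else artanh r / r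

/-- Fixed-point entropy production of the phase-covariant qubit dynamics,
extended to the whole Bloch ball, at the point with Bloch coordinates (ℓ, z). -/
noncomputable def sigmaFP (Γ γp zinf ℓ z : ℝ) : ℝ :=
  Γ * ℓ ^ 2 * F (Real.sqrt (ℓ ^ 2 + z ^ 2)) +
    γp * (zinf - z) * (artanh zinf - z * F (Real.sqrt (ℓ ^ 2 + z ^ 2)))

lemma artanh_eq_real_artanh {x : ℝ} (h0 : 0 ≤ x) (h1 : x < 1) : artanh x = Real.artanh x := by
  rw [Real.artanh_eq_half_log ⟨by linarith, h1.le⟩, artanh]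

lemma artanh_le_artanh_of_le {x y : ℝ} (hx : 0 ≤ x) (hy : y < 1) (hxy : x ≤ y) :
    artanh x ≤ artanh y := by
  rw [artanh_eq_real_artanh hx (by linarith), artanh_eq_real_artanh (by linarith) hy]
  exact Real.artanh_le_artanh (by linarith) hy hxy

lemma F_pos {r : ℝ} (h0 : 0 ≤ r) (h1 : r < 1) : 0 < F r := by
  unfold F
  split_ifs with h
  · exact one_pos
  · have hr : 0 < r := lt_of_le_of_ne h0 (Ne.symm h)
    rw [artanh_eq_real_artanh h0 h1]
    exact div_pos (Real.artanh_pos ⟨hr, h1⟩) hr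

lemma mul_F (r : ℝ) : r * F r = artanh r := by
  unfold F
  split_ifs with h
  · simp [h, artanh]
  · field_simp

/-- The convex quadratic `G` is nonnegative on `z ≤ r` once it is nonnegative at `z = r`. -/
lemma quadratic_nonneg {f a w r z : ℝ} (hf : 0 < f) (ha : 0 ≤ a) (hw : 0 ≤ w)
    (hzr : z ≤ r) (hend : 0 ≤ (w - r) * (a - r * f)) :
    0 ≤ (r ^ 2 - z ^ 2) / 2 * f + (w - z) * (a - z * f) := by
  rcases le_total (r * f) (a + w * f) with h | h
  · have h1 : (z + r) / 2 * f ≤ r * f := by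
      apply mul_le_mul_of_nonneg_right _ hf.le
      linarith
    have h2 : 0 ≤ (r - z) * (a + w * f - (z + r) / 2 * f) :=
      mul_nonneg (by linarith) (by linarith)
    linarith
  · have h1 : (a + w * f) ^ 2 ≤ (r * f) ^ 2 := pow_le_pow_left₀ (by positivity) h 2
    have h2 : 0 ≤ a * (w * f) := by positivity
    -- Completing the square around the vertex.
    have h3 : 0 ≤ 2 * f * ((r ^ 2 - z ^ 2) / 2 * f + (w - z) * (a - z * f)) := by
      have h4 := sq_nonneg (f * z - (a + w * f))
      linarith
    exact nonneg_of_mul_nonneg_right h3 (by positivity)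

/-- In the CP-divisible case 0 ≤ γ₊ ≤ 2Γ, the entropy production is nonnegative
everywhere on the Bloch ball. -/
theorem sigmaFP_nonneg_of_CP_divisible
    (zinf Γ γp : ℝ) (hz0 : 0 ≤ zinf) (hz1 : zinf < 1)
    (hγ : 0 ≤ γp) (hCP : γp ≤ 2 * Γ)
    (ℓ z : ℝ) (hℓ : 0 ≤ ℓ) (hball : ℓ ^ 2 + z ^ 2 < 1) :
    0 ≤ sigmaFP Γ γp zinf ℓ z := by
  unfold sigmaFP
  have hs : Real.sqrt (ℓ ^ 2 + z ^ 2) ^ 2 = ℓ ^ 2 + z ^ 2 := Real.sq_sqrt (by positivity)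
  have hr0 : 0 ≤ Real.sqrt (ℓ ^ 2 + z ^ 2) := Real.sqrt_nonneg _
  generalize Real.sqrt (ℓ ^ 2 + z ^ 2) = r at hs hr0 ⊢
  have hr1 : r < 1 := by nlinarith
  have hzr : z ≤ r := by nlinarith [sq_nonneg ℓ]
  have hf := F_pos hr0 hr1
  have ha : 0 ≤ artanh zinf := by
    simpa [artanh] using artanh_le_artanh_of_le le_rfl hz1 hz0
  have hend : 0 ≤ (zinf - r) * (artanh zinf - r * F r) := by
    rw [mul_F]
    rcases le_total zinf r with h | h
    · exact mul_nonneg_of_nonpos_of_nonpos (by linarith)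
        (by linarith [artanh_le_artanh_of_le hz0 hr1 h])
    · exact mul_nonneg (by linarith) (by linarith [artanh_le_artanh_of_le hr0 hz1 h])
  have hG := mul_nonneg hγ (quadratic_nonneg hf ha hz0 hzr hend)
  have hΓ : 0 ≤ (Γ - γp / 2) * (ℓ ^ 2 * F r) := mul_nonneg (by linarith) (by positivity)
  rw [hs] at hG
  linarith
end

section
/- Let z∞ ∈ (0,1), α := 1 − √(1 − z∞²), and fix z ∈ [0, z∞]. Then the function ℓ ↦ (α/2)·(ℓ²/r)·arctanh(r) + (z∞ − z)·(arctanh(z∞) − (z/r)·arctanh(r)), where r := √(ℓ² + z²), is strictly increasing on the interval (0, √(1 − z²)). -/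
lemma artanh_eq {r : ℝ} (h0 : 0 < r) (h1 : r < 1) :
    artanh r = (1/2) * (Real.log (1 + r) - Real.log (1 - r)) := by
  rw [artanh, Real.log_div (by linarith) (by linarith)]

lemma hasSum_artanh {r : ℝ} (h0 : 0 < r) (h1 : r < 1) :
    HasSum (fun n : ℕ => r ^ (2 * n + 1) / (2 * n + 1)) (artanh r) := by
  rw [artanh_eq h0 h1]
  have h := (Real.hasSum_log_sub_log_of_abs_lt_one
    (abs_lt.2 ⟨by linarith, h1⟩ : |r| < 1)).mul_left (1/2)
  refine (funext fun n => ?_ : (fun n : ℕ => r ^ (2 * n + 1) / (2 * (n : ℝ) + 1)) = _) ▸ h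
  ring

lemma hasSum_artanh_div {r : ℝ} (h0 : 0 < r) (h1 : r < 1) :
    HasSum (fun n : ℕ => r ^ (2 * n) / (2 * n + 1)) (artanh r / r) := by
  have h := (hasSum_artanh h0 h1).div_const r
  refine (funext fun n => ?_ : (fun n : ℕ => r ^ (2 * n) / (2 * (n : ℝ) + 1)) = _) ▸ h
  field_simp
  ring

lemma artanh_div_mono {r s : ℝ} (h0 : 0 < r) (hrs : r ≤ s) (h1 : s < 1) :
    artanh r / r ≤ artanh s / s := by
  refine hasSum_le (fun n => ?_) (hasSum_artanh_div h0 (hrs.trans_lt h1))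
    (hasSum_artanh_div (h0.trans_le hrs) h1)
  gcongr

lemma lt_artanh {r : ℝ} (h0 : 0 < r) (h1 : r < 1) : r < artanh r := by
  -- the first two terms of the power series already exceed `r`
  have h := sum_le_hasSum (Finset.range 2) (fun n _ => by positivity) (hasSum_artanh h0 h1)
  norm_num [Finset.sum_range_succ] at h
  have : 0 < r ^ 3 / 3 := by positivity
  linarith

lemma hasDerivAt_artanh {r : ℝ} (h0 : 0 < r) (h1 : r < 1) :
    HasDerivAt artanh (1 / (1 - r ^ 2)) r := by
  have hp : (1 + r) ≠ 0 := by linarith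
  have hm : (1 - r) ≠ 0 := by linarith
  have h := ((((hasDerivAt_id r).const_add 1).log hp).sub
    (((hasDerivAt_id r).const_sub 1).log hm)).const_mul (1/2)
  refine (h.congr_of_eventuallyEq ?_).congr_deriv ?_
  · filter_upwards [Ioo_mem_nhds h0 h1] with x hx
    simpa using artanh_eq hx.1 hx.2
  · have : (1 - r ^ 2) ≠ 0 := by
      rw [show 1 - r ^ 2 = (1 + r) * (1 - r) by ring]
      exact mul_ne_zero hp hm
    simp only [id]
    field_simp
    ring

lemma strictMonoOn_sq_sub_one_mul :
    StrictMonoOn (fun r : ℝ => (r ^ 2 - 1) * (artanh r / r)) (Set.Ioo 0 1) := by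
  have hd : ∀ r ∈ Set.Ioo (0 : ℝ) 1, HasDerivAt (fun r : ℝ => (r ^ 2 - 1) * (artanh r / r))
      (((r ^ 2 + 1) * artanh r - r) / r ^ 2) r := by
    intro r ⟨h0, h1⟩
    have h := (((hasDerivAt_id r).pow 2).sub_const 1).mul
      ((hasDerivAt_artanh h0 h1).div (hasDerivAt_id r) h0.ne')
    refine h.congr_deriv ?_
    have : (1 - r ^ 2) ≠ 0 := by nlinarith
    simp
    field_simp
    ring
  refine strictMonoOn_of_deriv_pos (convex_Ioo 0 1)
    (fun r hr => (hd r hr).continuousAt.continuousWithinAt) (fun r hr => ?_)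
  rw [interior_Ioo] at hr
  rw [(hd r hr).deriv]
  have h0 := hr.1
  have := lt_artanh hr.1 hr.2
  have : 0 < r ^ 2 * artanh r := mul_pos (by positivity) (by linarith)
  exact div_pos (by linarith) (by positivity)

/-- The coefficient `k` of `artanh r / r` is nonnegative. -/
lemma coeff_nonneg {w z : ℝ} (h1 : 0 < w) (h2 : w < 1) :
    0 ≤ (1 - Real.sqrt (1 - w ^ 2)) / 2 * (1 - z ^ 2) - z * (w - z) := by
  have hs := Real.sq_sqrt (show 0 ≤ 1 - w ^ 2 by nlinarith)
  have hs0 := Real.sqrt_nonneg (1 - w ^ 2)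
  generalize Real.sqrt (1 - w ^ 2) = s at *
  -- `1 - a = (1 + s) / 2`
  have key : 2 * (1 + s) * ((1 - s) / 2 * (1 - z ^ 2) - z * (w - z)) = (w - (1 + s) * z) ^ 2 := by
    linear_combination (-1) * hs
  by_contra! hneg
  nlinarith [sq_nonneg (w - (1 + s) * z)]

/-- The marginal entropy production s_m is strictly increasing in ℓ along any
horizontal slice of the Bloch ball. -/
theorem marginal_entropy_production_strictMono
    (zinf : ℝ) (h1 : 0 < zinf) (h2 : zinf < 1) (z : ℝ) (hz0 : 0 ≤ z) (hz : z ≤ zinf) :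
    StrictMonoOn
      (fun ℓ : ℝ =>
        (1 - Real.sqrt (1 - zinf ^ 2)) / 2 *
            (ℓ ^ 2 / Real.sqrt (ℓ ^ 2 + z ^ 2)) * artanh (Real.sqrt (ℓ ^ 2 + z ^ 2))
          + (zinf - z) *
            (artanh zinf - z / Real.sqrt (ℓ ^ 2 + z ^ 2) * artanh (Real.sqrt (ℓ ^ 2 + z ^ 2))))
      (Set.Ioo 0 (Real.sqrt (1 - z ^ 2))) := by
  have hk := coeff_nonneg (z := z) h1 h2
  have ha : 0 < (1 - Real.sqrt (1 - zinf ^ 2)) / 2 := by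
    have : Real.sqrt (1 - zinf ^ 2) < 1 := by
      rw [Real.sqrt_lt' one_pos]
      nlinarith
    linarith
  generalize (1 - Real.sqrt (1 - zinf ^ 2)) / 2 = a at *
  -- the decomposition of the function in terms of `r`
  have hdec : ∀ x : ℝ, a * (x ^ 2 / Real.sqrt (x ^ 2 + z ^ 2)) * artanh (Real.sqrt (x ^ 2 + z ^ 2))
      + (zinf - z) *
        (artanh zinf - z / Real.sqrt (x ^ 2 + z ^ 2) * artanh (Real.sqrt (x ^ 2 + z ^ 2))) =
      a * ((Real.sqrt (x ^ 2 + z ^ 2) ^ 2 - 1) *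
        (artanh (Real.sqrt (x ^ 2 + z ^ 2)) / Real.sqrt (x ^ 2 + z ^ 2))) +
      (a * (1 - z ^ 2) - z * (zinf - z)) *
        (artanh (Real.sqrt (x ^ 2 + z ^ 2)) / Real.sqrt (x ^ 2 + z ^ 2)) +
      (zinf - z) * artanh zinf := by
    intro x
    rw [Real.sq_sqrt (by positivity)]
    ring
  have hmem : ∀ x ∈ Set.Ioo 0 (Real.sqrt (1 - z ^ 2)),
      Real.sqrt (x ^ 2 + z ^ 2) ∈ Set.Ioo (0 : ℝ) 1 := by
    intro x ⟨hx0, hx1⟩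
    refine ⟨Real.sqrt_pos.2 (by positivity), ?_⟩
    rw [Real.lt_sqrt hx0.le] at hx1
    rw [Real.sqrt_lt' one_pos]
    linarith
  intro x hx y hy hxy
  have hr : Real.sqrt (x ^ 2 + z ^ 2) < Real.sqrt (y ^ 2 + z ^ 2) := by
    have := hx.1
    exact Real.sqrt_lt_sqrt (by positivity) (by gcongr)
  have e1 := mul_lt_mul_of_pos_left (strictMonoOn_sq_sub_one_mul (hmem x hx) (hmem y hy) hr) ha
  have e2 := mul_le_mul_of_nonneg_left
    (artanh_div_mono (hmem x hx).1 hr.le (hmem y hy).2) hk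
  simp only [hdec]
  linarith
end
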